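/- arXiv:2402.03990 — 2 statements merged into one kernel-verified Lean document; each statement's English description precedes it below -/
import Mathlib

section
/- Fix q ∈ (0,1]. For every integer k ≥ 1 there exists a measurable function g_k: ℝ → [0,∞) such that |∂_u^k f_x(u)| ≤ g_k(x) for all u ∈ [−1,1] and all x ∈ ℝ, and E_{x∼N(0,1)}[g_k(x)] < ∞. (Here ∂_u^k f_x denotes the k-th derivative of the smooth map u ↦ f_x(u).) -/
/-!
Since `φ(b) = φ(a) exp((a² - b²)/2)`, with `a = x - (1-q)u` and `b = x + qu` one has
`f_x(u) = (a² - x²)/2 - Λ((a² - b²)/2)`, where `Λ(t) = log (q + (1-q) eᵗ)` is the cumulant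
generating function of a Bernoulli variable. Its derivative `s = Λ'` takes values in `[0,1]` and
solves the logistic equation `s' = s (1 - s)`; thus each derivative of `s` is a polynomial in `s`,
hence bounded, and `Λ` has temperate growth. So `f_x(u)` has temperate growth jointly in `(x, u)`:
its `u`-derivatives of each order are polynomially bounded in `x`, uniformly for `u` in a bounded
set, and the normal distribution has moments of all orders.
-/

open MeasureTheory ProbabilityTheory Real

/-- The standard normal density `φ(t) = (2π)^{−1/2}·e^{−t²/2}`. -/
noncomputable def stdphi (t : ℝ) : ℝ := (Real.sqrt (2 * π))⁻¹ * Real.exp (-t ^ 2 / 2)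

/-- `f_x(u) = ln( φ(x) / ( q·φ(x − (1−q)u) + (1−q)·φ(x + qu) ) )`. -/
noncomputable def fX (q x u : ℝ) : ℝ :=
  Real.log (stdphi x / (q * stdphi (x - (1 - q) * u) + (1 - q) * stdphi (x + q * u)))

open Bornology
open scoped Polynomial

section Domination

variable {𝕜 E E' G : Type*} [NontriviallyNormedField 𝕜] [NormedAddCommGroup E] [NormedSpace 𝕜 E]
  [NormedAddCommGroup E'] [NormedSpace 𝕜 E'] [NormedAddCommGroup G] [NormedSpace 𝕜 G]

lemma norm_iteratedFDeriv_prodMk_right_le {F : E × E' → G} {k : ℕ} (hF : ContDiff 𝕜 k F)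
    (x : E) (u : E') :
    ‖iteratedFDeriv 𝕜 k (fun v => F (x, v)) u‖ ≤ ‖iteratedFDeriv 𝕜 k F (x, u)‖ := by
  let ι := ContinuousLinearMap.inr 𝕜 E E'
  have hι (v : E') : (x, 0) + ι v = (x, v) := by simp [ι]
  have hslice : (fun v => F (x, v)) = (fun z => F ((x, 0) + z)) ∘ ι :=
    funext fun v => congrArg F (hι v).symm
  have htranslate : ContDiff 𝕜 k fun z => F ((x, 0) + z) := by fun_prop
  rw [hslice, ι.iteratedFDeriv_comp_right htranslate _ le_rfl, iteratedFDeriv_comp_add_left, hι]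
  calc ‖(iteratedFDeriv 𝕜 k F (x, u)).compContinuousLinearMap fun _ => ι‖
      ≤ ‖iteratedFDeriv 𝕜 k F (x, u)‖ * ∏ _i : Fin k, ‖ι‖ :=
        ContinuousMultilinearMap.norm_compContinuousLinearMap_le _ _
    _ ≤ ‖iteratedFDeriv 𝕜 k F (x, u)‖ :=
        mul_le_of_le_one_right (norm_nonneg _) <| Finset.prod_le_one (fun _ _ => norm_nonneg _)
          fun _ _ => ContinuousLinearMap.norm_inr_le_one 𝕜 E E'

lemma integrable_const_add_norm_pow {α : Type*} [MeasurableSpace α] {μ : Measure α}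
    [IsFiniteMeasure μ] {f : α → E} {n : ℕ} (hf : MemLp f n μ) {c : ℝ} (hc : 0 ≤ c) :
    Integrable (fun a => (c + ‖f a‖) ^ n) μ := by
  have hnorm (a : α) : ‖c + ‖f a‖‖ = c + ‖f a‖ := Real.norm_of_nonneg (by positivity)
  simpa only [Pi.add_apply, hnorm] using ((memLp_const c).add hf.norm).integrable_norm_pow'

lemma exists_integrable_bound_iteratedFDeriv_prodMk_right [NormedSpace ℝ E] [NormedSpace ℝ E']
    [NormedSpace ℝ G] [MeasurableSpace E] [OpensMeasurableSpace E] {F : E × E' → G}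
    (hF : F.HasTemperateGrowth) (k : ℕ) {s : Set E'} (hs : IsBounded s) {μ : Measure E}
    [IsFiniteMeasure μ] (hμ : ∀ n : ℕ, MemLp id n μ) :
    ∃ g : E → ℝ, Measurable g ∧ (∀ x, 0 ≤ g x) ∧
      (∀ x, ∀ u ∈ s, ‖iteratedFDeriv ℝ k (fun v => F (x, v)) u‖ ≤ g x) ∧ Integrable g μ := by
  obtain ⟨n, C, hC, hbound⟩ := hF.norm_iteratedFDeriv_le_uniform k
  obtain ⟨R, hR, hsR⟩ := hs.exists_pos_norm_le
  refine ⟨fun x => C * (1 + R + ‖x‖) ^ n, by fun_prop, fun x => by positivity, fun x u hu => ?_,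
    (integrable_const_add_norm_pow (hμ n) (by positivity)).const_mul C⟩
  have hnorm : ‖(x, u)‖ ≤ R + ‖x‖ :=
    max_le (le_add_of_nonneg_left hR.le) ((hsR u hu).trans (le_add_of_nonneg_right (norm_nonneg x)))
  calc ‖iteratedFDeriv ℝ k (fun v => F (x, v)) u‖
      ≤ ‖iteratedFDeriv ℝ k F (x, u)‖ :=
        norm_iteratedFDeriv_prodMk_right_le (hF.1.of_le (mod_cast le_top)) x u
    _ ≤ C * (1 + ‖(x, u)‖) ^ n := hbound k le_rfl _
    _ ≤ C * (1 + R + ‖x‖) ^ n := by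
        rw [add_assoc]
        gcongr

end Domination

section PolynomialODE

variable {s : ℝ → ℝ} {P : ℝ[X]}

lemma exists_polynomial_iteratedDeriv_eq (hs : ∀ t, HasDerivAt s (P.eval (s t)) t) (n : ℕ) :
    ∃ Q : ℝ[X], iteratedDeriv n s = fun t => Q.eval (s t) := by
  induction n with
  | zero => exact ⟨.X, by simp⟩
  | succ n ih =>
    obtain ⟨Q, hQ⟩ := ih
    refine ⟨Q.derivative * P, funext fun t => ?_⟩
    rw [iteratedDeriv_succ, hQ, Polynomial.eval_mul]
    exact ((Q.hasDerivAt (s t)).comp t (hs t)).deriv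

lemma hasTemperateGrowth_of_isBounded_range_of_hasDerivAt_polynomial
    (hs : ∀ t, HasDerivAt s (P.eval (s t)) t) (hbdd : IsBounded (Set.range s)) :
    s.HasTemperateGrowth := by
  have hdiff : Differentiable ℝ s := fun t => (hs t).differentiableAt
  refine ⟨contDiff_of_differentiable_iteratedDeriv fun n _ => ?_, fun n => ?_⟩
  · obtain ⟨Q, hQ⟩ := exists_polynomial_iteratedDeriv_eq hs n
    rw [hQ]
    exact Q.differentiable.comp hdiff
  · obtain ⟨Q, hQ⟩ := exists_polynomial_iteratedDeriv_eq hs n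
    obtain ⟨C, hC⟩ := hbdd.isCompact_closure.exists_bound_of_continuousOn Q.continuous.continuousOn
    refine ⟨0, C, fun t => ?_⟩
    rw [norm_iteratedFDeriv_eq_norm_iteratedDeriv, hQ, pow_zero, mul_one]
    exact hC _ (subset_closure (Set.mem_range_self t))

end PolynomialODE

lemma hasTemperateGrowth_of_hasDerivAt {E : Type*} [NormedAddCommGroup E] [NormedSpace ℝ E]
    {f f' : ℝ → E} (hf' : f'.HasTemperateGrowth) (hf : ∀ t, HasDerivAt f (f' t) t) {C : ℝ} {k : ℕ}
    (hbound : ∀ t, ‖f t‖ ≤ C * (1 + ‖t‖) ^ k) : f.HasTemperateGrowth := by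
  have hfderiv : fderiv ℝ f = ContinuousLinearMap.toSpanSingletonCLE ∘ f' :=
    funext fun t => (hf t).hasFDerivAt.fderiv
  refine .of_fderiv ?_ (fun t => (hf t).differentiableAt) hbound
  rw [hfderiv]
  fun_prop

section Bernoulli

/-- The moment generating function `t ↦ E[exp(tB)]` of a Bernoulli variable `B` with success
probability `p`. -/
noncomputable def bernoulliMgf (p t : ℝ) : ℝ := 1 - p + p * exp t

/-- The cumulant generating function `t ↦ log E[exp(tB)]` of a Bernoulli variable `B` with success
probability `p`. -/
noncomputable def bernoulliCgf (p t : ℝ) : ℝ := log (bernoulliMgf p t)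

/-- The success probability of a Bernoulli variable with success probability `p` after exponential
tilting by `t`. In the mixture with weights `1 - p` and `p`, it is the posterior weight of the
second component when `t` is the log-likelihood ratio. -/
noncomputable def bernoulliTilt (p t : ℝ) : ℝ := p * exp t / bernoulliMgf p t

lemma hasDerivAt_bernoulliMgf (p t : ℝ) : HasDerivAt (bernoulliMgf p) (p * exp t) t :=
  ((hasDerivAt_exp t).const_mul p).const_add (1 - p)

variable {p : ℝ} (hp : p ∈ Set.Icc (0 : ℝ) 1) (t : ℝ)
include hp

lemma exp_neg_abs_le_bernoulliMgf : exp (-|t|) ≤ bernoulliMgf p t := by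
  have hp0 : 0 ≤ p := hp.1
  have hp1 : 0 ≤ 1 - p := sub_nonneg.2 hp.2
  have h0 : exp (-|t|) ≤ 1 := by simp
  have ht : exp (-|t|) ≤ exp t := exp_le_exp.2 (neg_abs_le t)
  calc exp (-|t|) = (1 - p) * exp (-|t|) + p * exp (-|t|) := by ring
    _ ≤ (1 - p) * 1 + p * exp t := by gcongr
    _ = bernoulliMgf p t := by rw [mul_one, bernoulliMgf]

lemma bernoulliMgf_le_exp_abs : bernoulliMgf p t ≤ exp |t| := by
  have hp0 : 0 ≤ p := hp.1
  have hp1 : 0 ≤ 1 - p := sub_nonneg.2 hp.2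
  have h0 : 1 ≤ exp |t| := by simp
  have ht : exp t ≤ exp |t| := exp_le_exp.2 (le_abs_self t)
  calc bernoulliMgf p t = (1 - p) * 1 + p * exp t := by rw [mul_one, bernoulliMgf]
    _ ≤ (1 - p) * exp |t| + p * exp |t| := by gcongr
    _ = exp |t| := by ring

lemma bernoulliMgf_pos : 0 < bernoulliMgf p t :=
  (exp_pos _).trans_le (exp_neg_abs_le_bernoulliMgf hp t)

lemma abs_bernoulliCgf_le : |bernoulliCgf p t| ≤ |t| :=
  abs_le.2 ⟨(le_log_iff_exp_le (bernoulliMgf_pos hp t)).2 (exp_neg_abs_le_bernoulliMgf hp t),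
    (log_le_iff_le_exp (bernoulliMgf_pos hp t)).2 (bernoulliMgf_le_exp_abs hp t)⟩

lemma bernoulliTilt_mem_Icc : bernoulliTilt p t ∈ Set.Icc (0 : ℝ) 1 := by
  have hpos := bernoulliMgf_pos hp t
  refine ⟨div_nonneg (mul_nonneg hp.1 (exp_pos t).le) hpos.le, (div_le_one hpos).2 ?_⟩
  exact le_add_of_nonneg_left (sub_nonneg.2 hp.2)

lemma hasDerivAt_bernoulliCgf : HasDerivAt (bernoulliCgf p) (bernoulliTilt p t) t :=
  (hasDerivAt_bernoulliMgf p t).log (bernoulliMgf_pos hp t).ne'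

lemma hasDerivAt_bernoulliTilt :
    HasDerivAt (bernoulliTilt p) (bernoulliTilt p t * (1 - bernoulliTilt p t)) t := by
  have hne := (bernoulliMgf_pos hp t).ne'
  refine (((hasDerivAt_exp t).const_mul p).div (hasDerivAt_bernoulliMgf p t) hne).congr_deriv ?_
  unfold bernoulliTilt
  field_simp

lemma hasTemperateGrowth_bernoulliTilt : (bernoulliTilt p).HasTemperateGrowth := by
  refine hasTemperateGrowth_of_isBounded_range_of_hasDerivAt_polynomial (P := .X * (1 - .X))
    (fun t => by simpa using hasDerivAt_bernoulliTilt hp t) ?_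
  exact (Metric.isBounded_Icc 0 1).subset (Set.range_subset_iff.2 (bernoulliTilt_mem_Icc hp))

lemma hasTemperateGrowth_bernoulliCgf : (bernoulliCgf p).HasTemperateGrowth :=
  hasTemperateGrowth_of_hasDerivAt (hasTemperateGrowth_bernoulliTilt hp)
    (hasDerivAt_bernoulliCgf hp) (C := 1) (k := 1) fun t =>
      (abs_bernoulliCgf_le hp t).trans (by simp)

end Bernoulli

lemma stdphi_pos (x : ℝ) : 0 < stdphi x := by
  unfold stdphi
  positivity

lemma stdphi_eq_mul_exp (x y : ℝ) : stdphi y = stdphi x * exp ((x ^ 2 - y ^ 2) / 2) := by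
  rw [stdphi, stdphi, mul_assoc, ← exp_add]
  ring_nf

lemma log_stdphi_div_mixture {q : ℝ} (hq : q ∈ Set.Icc (0 : ℝ) 1) (x a b : ℝ) :
    log (stdphi x / (q * stdphi a + (1 - q) * stdphi b)) =
      (a ^ 2 - x ^ 2) / 2 - bernoulliCgf (1 - q) ((a ^ 2 - b ^ 2) / 2) := by
  have hmixture : q * stdphi a + (1 - q) * stdphi b =
      stdphi a * bernoulliMgf (1 - q) ((a ^ 2 - b ^ 2) / 2) := by
    rw [stdphi_eq_mul_exp a b, bernoulliMgf]
    ring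
  have hpos := bernoulliMgf_pos (Set.Icc.mem_iff_one_sub_mem.1 hq) ((a ^ 2 - b ^ 2) / 2)
  rw [hmixture, stdphi_eq_mul_exp a x, mul_div_mul_left _ _ (stdphi_pos a).ne',
    log_div (exp_ne_zero _) hpos.ne', log_exp, bernoulliCgf]

lemma hasTemperateGrowth_fX {q : ℝ} (hq : q ∈ Set.Icc (0 : ℝ) 1) :
    (fun z : ℝ × ℝ => fX q z.1 z.2).HasTemperateGrowth := by
  have hfst : (fun z : ℝ × ℝ => z.1).HasTemperateGrowth :=
    (ContinuousLinearMap.fst ℝ ℝ ℝ).hasTemperateGrowth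
  have hsnd : (fun z : ℝ × ℝ => z.2).HasTemperateGrowth :=
    (ContinuousLinearMap.snd ℝ ℝ ℝ).hasTemperateGrowth
  have hcgf := hasTemperateGrowth_bernoulliCgf (Set.Icc.mem_iff_one_sub_mem.1 hq)
  simp only [fX, log_stdphi_div_mixture hq]
  simp only [div_eq_mul_inv]
  fun_prop

theorem exists_integrable_bound_iteratedDeriv_fX_general {q : ℝ} (hq : q ∈ Set.Icc (0 : ℝ) 1)
    (k : ℕ) {s : Set ℝ} (hs : IsBounded s) {μ : Measure ℝ} [IsFiniteMeasure μ]
    (hμ : ∀ n : ℕ, MemLp id n μ) :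
    ∃ g : ℝ → ℝ, Measurable g ∧ (∀ x, 0 ≤ g x) ∧
      (∀ x : ℝ, ∀ u ∈ s, |iteratedDeriv k (fun v => fX q x v) u| ≤ g x) ∧ Integrable g μ := by
  simpa only [norm_iteratedFDeriv_eq_norm_iteratedDeriv, norm_eq_abs] using
    exists_integrable_bound_iteratedFDeriv_prodMk_right (hasTemperateGrowth_fX hq) k hs hμ

/-- For every `k ≥ 1` there is a measurable `g_k : ℝ → [0,∞)` dominating the `k`-th
`u`-derivative of `f_x` uniformly over `u ∈ [−1,1]`, with `E_{x∼N(0,1)}[g_k(x)] < ∞`. -/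
theorem exists_integrable_bound_iteratedDeriv_fX (q : ℝ) (hq : q ∈ Set.Ioc (0 : ℝ) 1)
    (k : ℕ) (hk : 1 ≤ k) :
    ∃ g : ℝ → ℝ, Measurable g ∧ (∀ x, 0 ≤ g x) ∧
      (∀ x : ℝ, ∀ u ∈ Set.Icc (-1 : ℝ) 1, |iteratedDeriv k (fun v => fX q x v) u| ≤ g x) ∧
      Integrable g (gaussianReal 0 1) :=
  exists_integrable_bound_iteratedDeriv_fX_general (Set.Ioc_subset_Icc_self hq) k
    (Metric.isBounded_Icc (-1) 1) fun n => memLp_id_gaussianReal n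
end

section
/- For every σ > 0 and q ∈ (0,1], the PLRV L_{σ,q} of a single iteration of the Poisson subsampled Gaussian mechanism satisfies E(L_{σ,q}) ≥ q²/(2σ²). -/
open MeasureTheory ProbabilityTheory Real Filter

/-- Density of the dominating-pair mixture `P_{σ,q}` for the Poisson subsampled Gaussian
mechanism with sensitivity 1: `p_{σ,q}(t) = q·φ_σ(t−1) + (1−q)·φ_σ(t)`. -/
noncomputable def mixDensity (σ q t : ℝ) : ℝ :=
  q * gaussianPDFReal 1 (σ ^ 2).toNNReal t + (1 - q) * gaussianPDFReal 0 (σ ^ 2).toNNReal t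

/-- The mixture measure `P_{σ,q}`. -/
noncomputable def mixMeasure (σ q : ℝ) : Measure ℝ :=
  MeasureTheory.volume.withDensity fun t => ENNReal.ofReal (mixDensity σ q t)

/-- The privacy loss function `t ↦ ln(p_{σ,q}(t)/φ_σ(t))`. -/
noncomputable def plrv (σ q t : ℝ) : ℝ :=
  Real.log (mixDensity σ q t / gaussianPDFReal 0 (σ ^ 2).toNNReal t)

/-!
The mean privacy loss is the Kullback–Leibler divergence of `P = P_{σ,q}` from `Q = N(0,σ²)`.
The Donsker–Varadhan inequality `∫ f dP - log ∫ exp f dQ ≤ KL(P‖Q)` for the linear function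
`f t = q t / σ²` uses only the mean `q` of `P` and the moment generating function of `Q`, and its
left-hand side is `q²/σ² - q²/(2σ²)`. The choice of `f` is optimal: it tilts `Q` to the Gaussian
with the mean of `P`.
-/

lemma integral_sub_log_integral_exp_le_integral_llr {α : Type*} {mα : MeasurableSpace α}
    {μ ν : Measure α} [IsProbabilityMeasure μ] [SigmaFinite ν] {f : α → ℝ} (hμν : μ ≪ ν)
    (hfμ : Integrable f μ) (hfν : Integrable (fun x ↦ exp (f x)) ν)
    (h_int : Integrable (llr μ ν) μ) :
    ∫ x, f x ∂μ - log (∫ x, exp (f x) ∂ν) ≤ ∫ x, llr μ ν x ∂μ := by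
  have : NeZero ν := ⟨fun hν ↦ NeZero.ne μ (Measure.absolutelyContinuous_zero_iff.1 (hν ▸ hμν))⟩
  have : IsProbabilityMeasure (ν.tilted f) := isProbabilityMeasure_tilted hfν
  have gibbs := InformationTheory.integral_llr_add_sub_measure_univ_nonneg
    (hμν.trans (absolutelyContinuous_tilted hfν))
    (integrable_llr_tilted_right hμν hfμ h_int hfν)
  rw [integral_llr_tilted_right hμν hfμ hfν h_int, probReal_univ, probReal_univ] at gibbs
  linarith

lemma sq_integral_sub_div_le_integral_llr_gaussianReal {P : Measure ℝ} [IsProbabilityMeasure P]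
    (m : ℝ) {v : NNReal} (hv : v ≠ 0) (hP : P ≪ gaussianReal m v)
    (h_id : Integrable (fun t ↦ t) P) (h_int : Integrable (llr P (gaussianReal m v)) P) :
    (∫ t, t ∂P - m) ^ 2 / (2 * v) ≤ ∫ t, llr P (gaussianReal m v) t ∂P := by
  set c : ℝ := (∫ t, t ∂P - m) / v with hc
  have log_mgf : log (∫ t, exp (c * t) ∂gaussianReal m v) = m * c + v * c ^ 2 / 2 :=
    cgf_gaussianReal (X := id) Measure.map_id c
  calc (∫ t, t ∂P - m) ^ 2 / (2 * v)
      = ∫ t, c * t ∂P - log (∫ t, exp (c * t) ∂gaussianReal m v) := by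
        rw [log_mgf, integral_const_mul, hc]
        field_simp
        ring
    _ ≤ ∫ t, llr P (gaussianReal m v) t ∂P :=
        integral_sub_log_integral_exp_le_integral_llr hP (h_id.const_mul c)
          (integrable_exp_mul_gaussianReal c) h_int

lemma integrable_id_gaussianReal (m : ℝ) (v : NNReal) :
    Integrable (fun t ↦ t) (gaussianReal m v) :=
  (memLp_id_gaussianReal 1).integrable le_rfl

lemma gaussianPDFReal_div_gaussianPDFReal (m₁ m₀ : ℝ) {v : NNReal} (hv : v ≠ 0) (t : ℝ) :
    gaussianPDFReal m₁ v t / gaussianPDFReal m₀ v t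
      = exp ((m₁ - m₀) * (2 * t - m₁ - m₀) / (2 * v)) := by
  rw [div_eq_iff (gaussianPDFReal_pos m₀ v t hv).ne', gaussianPDFReal, gaussianPDFReal,
    mul_left_comm, ← exp_add]
  congr 2
  field_simp
  ring

lemma abs_log_mul_exp_add_one_sub_le {q : ℝ} (hq : q ∈ Set.Icc (0 : ℝ) 1) (x : ℝ) :
    |log (q * exp x + (1 - q))| ≤ |x| := by
  have exp_mem : exp x ∈ Set.Icc (exp (-|x|)) (exp |x|) :=
    ⟨exp_le_exp.2 (neg_abs_le x), exp_le_exp.2 (le_abs_self x)⟩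
  have one_mem : (1 : ℝ) ∈ Set.Icc (exp (-|x|)) (exp |x|) :=
    ⟨exp_le_one_iff.2 (neg_nonpos.2 (abs_nonneg x)), one_le_exp (abs_nonneg x)⟩
  have mix_mem : q * exp x + (1 - q) ∈ Set.Icc (exp (-|x|)) (exp |x|) := by
    simpa only [smul_eq_mul, mul_one] using
      convex_Icc _ _ exp_mem one_mem hq.1 (sub_nonneg.2 hq.2) (add_sub_cancel q 1)
  have mix_pos : 0 < q * exp x + (1 - q) := (exp_pos _).trans_le mix_mem.1
  exact abs_le.2 ⟨(le_log_iff_exp_le mix_pos).2 mix_mem.1, (log_le_iff_le_exp mix_pos).2 mix_mem.2⟩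

lemma measurable_mixDensity (σ q : ℝ) : Measurable (mixDensity σ q) :=
  ((measurable_gaussianPDFReal _ _).const_mul _).add ((measurable_gaussianPDFReal _ _).const_mul _)

lemma measurable_plrv (σ q : ℝ) : Measurable (plrv σ q) :=
  ((measurable_mixDensity σ q).div (measurable_gaussianPDFReal _ _)).log

lemma mixDensity_nonneg (σ : ℝ) {q : ℝ} (hq : q ∈ Set.Icc (0 : ℝ) 1) (t : ℝ) :
    0 ≤ mixDensity σ q t :=
  add_nonneg (mul_nonneg hq.1 (gaussianPDFReal_nonneg _ _ _))
    (mul_nonneg (sub_nonneg.2 hq.2) (gaussianPDFReal_nonneg _ _ _))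

lemma toNNReal_sq_ne_zero {σ : ℝ} (hσ : σ ≠ 0) : (σ ^ 2).toNNReal ≠ 0 :=
  (toNNReal_pos.2 (sq_pos_of_ne_zero hσ)).ne'

lemma plrv_eq_log_mul_exp_add {σ : ℝ} (hσ : σ ≠ 0) (q t : ℝ) :
    plrv σ q t = log (q * exp ((2 * t - 1) / (2 * σ ^ 2)) + (1 - q)) := by
  have hv := toNNReal_sq_ne_zero hσ
  rw [plrv, mixDensity, add_div, mul_div_assoc, mul_div_assoc,
    div_self (gaussianPDFReal_pos 0 _ t hv).ne', gaussianPDFReal_div_gaussianPDFReal 1 0 hv,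
    coe_toNNReal _ (sq_nonneg σ), sub_zero, sub_zero, one_mul, mul_one]

lemma mixMeasure_absolutelyContinuous_gaussianReal {σ : ℝ} (hσ : σ ≠ 0) (q : ℝ) :
    mixMeasure σ q ≪ gaussianReal 0 (σ ^ 2).toNNReal :=
  (withDensity_absolutelyContinuous _ _).trans
    (gaussianReal_absolutelyContinuous' 0 (toNNReal_sq_ne_zero hσ))

section

variable {σ q : ℝ} (hσ : σ ≠ 0) (hq : q ∈ Set.Icc (0 : ℝ) 1)

include hσ hq

lemma mixMeasure_eq_smul_gaussianReal_add :
    mixMeasure σ q = ENNReal.ofReal q • gaussianReal 1 (σ ^ 2).toNNReal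
      + ENNReal.ofReal (1 - q) • gaussianReal 0 (σ ^ 2).toNNReal := by
  have hv := toNNReal_sq_ne_zero hσ
  rw [gaussianReal_of_var_ne_zero 1 hv, gaussianReal_of_var_ne_zero 0 hv,
    ← withDensity_smul _ (measurable_gaussianPDF _ _),
    ← withDensity_smul _ (measurable_gaussianPDF _ _),
    ← withDensity_add_left ((measurable_gaussianPDF _ _).const_smul _), mixMeasure]
  congr with t
  simp only [Pi.add_apply, Pi.smul_apply, smul_eq_mul, gaussianPDF, mixDensity]
  rw [ENNReal.ofReal_add (mul_nonneg hq.1 (gaussianPDFReal_nonneg _ _ _))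
      (mul_nonneg (sub_nonneg.2 hq.2) (gaussianPDFReal_nonneg _ _ _)),
    ENNReal.ofReal_mul hq.1, ENNReal.ofReal_mul (sub_nonneg.2 hq.2)]

lemma isProbabilityMeasure_mixMeasure : IsProbabilityMeasure (mixMeasure σ q) where
  measure_univ := by
    rw [mixMeasure_eq_smul_gaussianReal_add hσ hq, Measure.add_apply, Measure.smul_apply,
      Measure.smul_apply, measure_univ, measure_univ, smul_eq_mul, smul_eq_mul, mul_one, mul_one,
      ← ENNReal.ofReal_add hq.1 (sub_nonneg.2 hq.2), add_sub_cancel, ENNReal.ofReal_one]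

lemma integrable_mixMeasure {E : Type*} [NormedAddCommGroup E] {f : ℝ → E}
    (h₁ : Integrable f (gaussianReal 1 (σ ^ 2).toNNReal))
    (h₀ : Integrable f (gaussianReal 0 (σ ^ 2).toNNReal)) : Integrable f (mixMeasure σ q) := by
  rw [mixMeasure_eq_smul_gaussianReal_add hσ hq]
  exact (h₁.smul_measure ENNReal.ofReal_ne_top).add_measure
    (h₀.smul_measure ENNReal.ofReal_ne_top)

lemma integral_mixMeasure {E : Type*} [NormedAddCommGroup E] [NormedSpace ℝ E] {f : ℝ → E}
    (h₁ : Integrable f (gaussianReal 1 (σ ^ 2).toNNReal))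
    (h₀ : Integrable f (gaussianReal 0 (σ ^ 2).toNNReal)) :
    ∫ t, f t ∂mixMeasure σ q = q • ∫ t, f t ∂gaussianReal 1 (σ ^ 2).toNNReal
      + (1 - q) • ∫ t, f t ∂gaussianReal 0 (σ ^ 2).toNNReal := by
  rw [mixMeasure_eq_smul_gaussianReal_add hσ hq,
    integral_add_measure (h₁.smul_measure ENNReal.ofReal_ne_top)
      (h₀.smul_measure ENNReal.ofReal_ne_top),
    integral_smul_measure, integral_smul_measure, ENNReal.toReal_ofReal hq.1,
    ENNReal.toReal_ofReal (sub_nonneg.2 hq.2)]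

lemma integrable_id_mixMeasure : Integrable (fun t ↦ t) (mixMeasure σ q) :=
  integrable_mixMeasure hσ hq (integrable_id_gaussianReal 1 _) (integrable_id_gaussianReal 0 _)

lemma integral_id_mixMeasure : ∫ t, t ∂mixMeasure σ q = q := by
  rw [integral_mixMeasure hσ hq (integrable_id_gaussianReal 1 _) (integrable_id_gaussianReal 0 _),
    integral_id_gaussianReal, integral_id_gaussianReal, smul_zero, add_zero, smul_eq_mul, mul_one]

lemma integrable_plrv_mixMeasure : Integrable (plrv σ q) (mixMeasure σ q) := by
  have := isProbabilityMeasure_mixMeasure hσ hq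
  have h_bound : Integrable (fun t ↦ (2 * t - 1) / (2 * σ ^ 2)) (mixMeasure σ q) :=
    (((integrable_id_mixMeasure hσ hq).const_mul 2).sub (integrable_const 1)).div_const _
  refine h_bound.mono (measurable_plrv σ q).aestronglyMeasurable (ae_of_all _ fun t ↦ ?_)
  rw [plrv_eq_log_mul_exp_add hσ]
  exact abs_log_mul_exp_add_one_sub_le hq _

lemma llr_mixMeasure_gaussianReal_ae_eq_plrv :
    llr (mixMeasure σ q) (gaussianReal 0 (σ ^ 2).toNNReal) =ᵐ[mixMeasure σ q] plrv σ q := by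
  have := isProbabilityMeasure_mixMeasure hσ hq
  have hv := toNNReal_sq_ne_zero hσ
  have hQ_vol := gaussianReal_absolutelyContinuous 0 hv
  refine (mixMeasure_absolutelyContinuous_gaussianReal hσ q).ae_le ?_
  filter_upwards [Measure.rnDeriv_eq_div (μ := mixMeasure σ q)
      (withDensity_absolutelyContinuous _ _) hQ_vol,
    hQ_vol.ae_le (Measure.rnDeriv_withDensity volume (measurable_mixDensity σ q).ennreal_ofReal),
    hQ_vol.ae_le (rnDeriv_gaussianReal 0 _)] with t h_div hP hQ
  rw [llr, h_div, mixMeasure, hP, hQ, ENNReal.toReal_div, toReal_gaussianPDF,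
    ENNReal.toReal_ofReal (mixDensity_nonneg σ hq t), plrv]

end

/-- The mean of the PLRV of a single iteration of the Poisson subsampled Gaussian mechanism
is at least `q²/(2σ²)`. -/
theorem plrv_mean_lower_bound (σ q : ℝ) (hσ : 0 < σ) (hq : q ∈ Set.Ioc (0 : ℝ) 1) :
    q ^ 2 / (2 * σ ^ 2) ≤ ∫ t, plrv σ q t ∂(mixMeasure σ q) := by
  have hq' := Set.Ioc_subset_Icc_self hq
  have := isProbabilityMeasure_mixMeasure hσ.ne' hq'
  have h_llr := llr_mixMeasure_gaussianReal_ae_eq_plrv hσ.ne' hq'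
  have h_int := (integrable_congr h_llr).2 (integrable_plrv_mixMeasure hσ.ne' hq')
  have kl_bound := sq_integral_sub_div_le_integral_llr_gaussianReal 0
    (toNNReal_sq_ne_zero hσ.ne') (mixMeasure_absolutelyContinuous_gaussianReal hσ.ne' q)
    (integrable_id_mixMeasure hσ.ne' hq') h_int
  rwa [integral_id_mixMeasure hσ.ne' hq', integral_congr_ae h_llr, sub_zero,
    coe_toNNReal _ (sq_nonneg σ)] at kl_bound
end
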